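/- Brascamp–Lieb variance inequality: There exists a constant C > 0 depending only on a_V and A_V such that for every finite connected graph G = (V ∪ ∂V, E) with distinguished nonempty set ∂V, every boundary condition ψ : ∂V → ℝ, and every ν ∈ ℝ^V, the variance of ⟨ν, h⟩ = Σ_{x∈V} ν(x) h(x) when h is distributed according to the GL measure P^ψ is at most C times the variance of ⟨ν, h*⟩ when h* is distributed according to the zero-boundary discrete Gaussian free field on G with unit weights. -/

import Mathlib

/-! The gradient of `h ∨ ψ` differs from that of `h ∨ 0` by a constant on each edge, so, whatever
`ψ` is, the GL Hamiltonian minus `a_V / 2` times the Dirichlet form `ℰ` is convex, while the law of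
the free field is the Gaussian with density `exp (-ℰ / 2)`. As `ℰ` is nondegenerate,
`⟨ν, ·⟩ = ℰ(g, ·)` for some `g`; translating by multiples of `g` shows that its variance under the
free field is `ℰ(g, g)`. Under the GL measure, completing the square shows that the cumulant
generating function of `ℰ(g, ·)` minus `t² ℰ(g, g) / (2 a_V)` is, up to an additive constant, the
logarithm of a marginal of a log-concave function of `(t, h)`. By the Prékopa–Leindler inequality
such a marginal is log-concave, and the second derivative at `t = 0` bounds the variance by
`ℰ(g, g) / a_V`. -/

open MeasureTheory ProbabilityTheory Real
open scoped ENNReal NNReal Classical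

noncomputable section

/-- `h ∨ ψ`: the field `h` on the interior `V = (∂V)ᶜ` extended by `ψ` on the boundary `∂V = B`. -/
def gvee {α : Type*} [DecidableEq α] (B : Finset α) (h : {x // x ∉ B} → ℝ) (ψ : α → ℝ) :
    α → ℝ :=
  fun x => if hx : x ∉ B then h ⟨x, hx⟩ else ψ x

/-- GL Hamiltonian `∑_{b ∈ E} V(∇(h∨ψ)(b))` on a graph (each undirected edge counted once,
which for even `V` agrees with half the sum over ordered adjacent pairs). -/
def graphGLEnergy {α : Type*} [Fintype α] [DecidableEq α] (V : ℝ → ℝ)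
    (G : SimpleGraph α) [DecidableRel G.Adj] (B : Finset α) (ψ : α → ℝ)
    (h : {x // x ∉ B} → ℝ) : ℝ :=
  (1 / 2) * ∑ x : α, ∑ y : α, if G.Adj x y then V (gvee B h ψ y - gvee B h ψ x) else 0

/-- `P` is the GL measure on the graph `G` with boundary set `B`, potential `V` and boundary
condition `ψ`: a probability measure proportional to `exp(−H) dh` on `ℝ^V`. -/
def IsGraphGL {α : Type*} [Fintype α] [DecidableEq α] (V : ℝ → ℝ)
    (G : SimpleGraph α) [DecidableRel G.Adj] (B : Finset α) (ψ : α → ℝ)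
    (P : Measure ({x // x ∉ B} → ℝ)) : Prop :=
  IsProbabilityMeasure P ∧ ∃ c : ℝ≥0∞, c ≠ 0 ∧ c ≠ ⊤ ∧
    P = c • (volume.withDensity fun h => ENNReal.ofReal (Real.exp (-(graphGLEnergy V G B ψ h))))

/-- DGFF Hamiltonian `(1/2) ∑_{b ∈ E} ω(b) (∇(h∨φ)(b))²` on a weighted graph. -/
def graphDGFFEnergy {α : Type*} [Fintype α] [DecidableEq α]
    (G : SimpleGraph α) [DecidableRel G.Adj] (B : Finset α) (w : α → α → ℝ) (φ : α → ℝ)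
    (h : {x // x ∉ B} → ℝ) : ℝ :=
  (1 / 4) * ∑ x : α, ∑ y : α,
    if G.Adj x y then w x y * (gvee B h φ y - gvee B h φ x) ^ 2 else 0

/-- `P` is the discrete Gaussian free field on the weighted graph `(G, w)` with boundary set `B`
and boundary condition `φ`. -/
def IsGraphDGFF {α : Type*} [Fintype α] [DecidableEq α]
    (G : SimpleGraph α) [DecidableRel G.Adj] (B : Finset α) (w : α → α → ℝ) (φ : α → ℝ)
    (P : Measure ({x // x ∉ B} → ℝ)) : Prop :=
  IsProbabilityMeasure P ∧ ∃ c : ℝ≥0∞, c ≠ 0 ∧ c ≠ ⊤ ∧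
    P = c • (volume.withDensity fun h =>
      ENNReal.ofReal (Real.exp (-(graphDGFFEnergy G B w φ h))))

section BrunnMinkowski

open scoped Pointwise

/- `A` and `B` have translates inside `A + B` meeting only at the largest point of one and the
smallest point of the other. -/
theorem volume_add_volume_le_volume_add_of_isCompact {A B : Set ℝ} (hA : IsCompact A)
    (hB : IsCompact B) (hA₀ : A.Nonempty) (hB₀ : B.Nonempty) :
    volume A + volume B ≤ volume (A + B) := by
  have hdisj : AEDisjoint volume ((· + sInf B) '' A) ((sSup A + ·) '' B) := by
    refine measure_mono_null (t := {sSup A + sInf B}) ?_ Real.volume_singleton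
    rintro _ ⟨⟨x, hx, rfl⟩, ⟨y, hy, hxy⟩⟩
    have hxA : x ≤ sSup A := le_csSup hA.bddAbove hx
    have hyB : sInf B ≤ y := csInf_le hB.bddBelow hy
    simp only [Set.mem_singleton_iff] at hxy ⊢
    linarith
  have hmeas : NullMeasurableSet ((sSup A + ·) '' B) volume :=
    (hB.image (continuous_const_add _)).measurableSet.nullMeasurableSet
  calc volume A + volume B
      = volume ((· + sInf B) '' A) + volume ((sSup A + ·) '' B) := by
        simp only [Set.image_add_right, Set.image_add_left, measure_preimage_add_right,
          measure_preimage_add]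
    _ = volume ((· + sInf B) '' A ∪ (sSup A + ·) '' B) := (measure_union₀ hmeas hdisj).symm
    _ ≤ volume (A + B) := measure_mono <| Set.union_subset
        (Set.image_subset_iff.2 fun _ hx => Set.add_mem_add hx (hB.sInf_mem hB₀))
        (Set.image_subset_iff.2 fun _ hy => Set.add_mem_add (hA.sSup_mem hA₀) hy)

theorem volume_add_volume_le_volume_add {A B : Set ℝ} (hA : MeasurableSet A)
    (hB : MeasurableSet B) (hA₀ : A.Nonempty) (hB₀ : B.Nonempty) :
    volume A + volume B ≤ volume (A + B) := by
  obtain ⟨x, hx⟩ := hA₀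
  obtain ⟨y, hy⟩ := hB₀
  simp_rw [hA.measure_eq_iSup_isCompact, hB.measure_eq_iSup_isCompact, iSup_and']
  refine ENNReal.biSup_add_biSup_le' ⟨∅, A.empty_subset, isCompact_empty⟩
    ⟨∅, B.empty_subset, isCompact_empty⟩ ?_
  rintro K ⟨hKA, hK⟩ L ⟨hLB, hL⟩
  calc volume K + volume L ≤ volume (insert x K) + volume (insert y L) :=
        add_le_add (measure_mono (Set.subset_insert x K)) (measure_mono (Set.subset_insert y L))
    _ ≤ volume (insert x K + insert y L) :=
        volume_add_volume_le_volume_add_of_isCompact (hK.insert x) (hL.insert y)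
          (Set.insert_nonempty x K) (Set.insert_nonempty y L)
    _ ≤ volume (A + B) := measure_mono <|
        Set.add_subset_add (Set.insert_subset hx hKA) (Set.insert_subset hy hLB)

theorem ofReal_mul_volume_add_le_volume_smul_add_smul {A B : Set ℝ} {a b : ℝ} (ha : 0 < a)
    (hb : 0 < b) (hA : MeasurableSet A) (hB : MeasurableSet B) (hA₀ : A.Nonempty)
    (hB₀ : B.Nonempty) :
    ENNReal.ofReal a * volume A + ENNReal.ofReal b * volume B ≤ volume (a • A + b • B) := by
  simpa [Measure.addHaar_smul, abs_of_pos ha, abs_of_pos hb] using volume_add_volume_le_volume_add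
    (hA.const_smul₀ a) (hB.const_smul₀ b) hA₀.smul_set hB₀.smul_set

end BrunnMinkowski

theorem volume_Ioi_inter_ofReal_lt (c : ℝ≥0∞) :
    volume {t : ℝ | 0 < t ∧ ENNReal.ofReal t < c} = c := by
  rcases eq_or_ne c ⊤ with rfl | hc
  · simpa [Set.Ioi] using Real.volume_Ioi (a := 0)
  · calc volume {t : ℝ | 0 < t ∧ ENNReal.ofReal t < c} = volume (Set.Ioo 0 c.toReal) := by
          congr 1
          ext t
          exact and_congr_right fun ht => ENNReal.ofReal_lt_iff_lt_toReal ht.le hc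
      _ = c := by rw [Real.volume_Ioo, sub_zero, ENNReal.ofReal_toReal hc]

/- Both sides compute the measure of the region under the graph of `f`. -/
theorem lintegral_eq_lintegral_Ioi_measure_lt {E : Type*} [MeasurableSpace E] {μ : Measure E}
    [SFinite μ] {f : E → ℝ≥0∞} (hf : Measurable f) :
    ∫⁻ x, f x ∂μ = ∫⁻ t in Set.Ioi (0 : ℝ), μ {x | ENNReal.ofReal t < f x} := by
  have hS : MeasurableSet {p : E × ℝ | 0 < p.2 ∧ ENNReal.ofReal p.2 < f p.1} :=
    (measurableSet_lt measurable_const measurable_snd).inter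
      (measurableSet_lt measurable_snd.ennreal_ofReal (hf.comp measurable_fst))
  calc ∫⁻ x, f x ∂μ = μ.prod volume {p : E × ℝ | 0 < p.2 ∧ ENNReal.ofReal p.2 < f p.1} := by
        simp [Measure.prod_apply hS, volume_Ioi_inter_ofReal_lt]
    _ = ∫⁻ t in Set.Ioi (0 : ℝ), μ {x | ENNReal.ofReal t < f x} := by
        rw [Measure.prod_apply_symm hS, ← lintegral_indicator measurableSet_Ioi]
        refine lintegral_congr fun t => ?_
        by_cases ht : 0 < t <;> simp [ht]

theorem lintegral_eq_iSup_lintegral_min_nat {E : Type*} [MeasurableSpace E] {μ : Measure E}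
    {f : E → ℝ≥0∞} (hf : Measurable f) :
    ∫⁻ x, f x ∂μ = ⨆ n : ℕ, ∫⁻ x, min (f x) n ∂μ := by
  rw [← lintegral_iSup (fun n => hf.min measurable_const)
    fun m n hmn x => min_le_min_left _ (Nat.cast_le.2 hmn)]
  simp_rw [← inf_iSup_eq, ENNReal.iSup_natCast, inf_top_eq]

theorem rpow_mul_rpow_le_ofReal_mul_add {a b : ℝ} (ha : 0 < a) (hb : 0 < b) (hab : a + b = 1)
    (u v : ℝ≥0∞) : u ^ a * v ^ b ≤ ENNReal.ofReal a * u + ENNReal.ofReal b * v := by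
  simpa [← ENNReal.rpow_mul, ha.ne', hb.ne', div_eq_mul_inv, mul_comm, ENNReal.ofReal_inv_of_pos,
    ha, hb] using
    ENNReal.young_inequality (u ^ a) (v ^ b) (Real.HolderConjugate.inv_inv ha hb hab)

/-- The measure `μ` satisfies the **Prékopa–Leindler inequality** for all weights. Functions are
`[0, ∞]`-valued, so that no integrability has to be assumed. -/
def PrekopaLeindler {E : Type*} [AddCommGroup E] [Module ℝ E] [MeasurableSpace E]
    (μ : Measure E) : Prop :=
  ∀ ⦃a b : ℝ⦄, 0 < a → 0 < b → a + b = 1 → ∀ ⦃f g h : E → ℝ≥0∞⦄,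
    Measurable f → Measurable g → Measurable h →
    (∀ x y, f x ^ a * g y ^ b ≤ h (a • x + b • y)) →
    (∫⁻ x, f x ∂μ) ^ a * (∫⁻ x, g x ∂μ) ^ b ≤ ∫⁻ x, h x ∂μ

section RealLine

variable {a b : ℝ} {f g h : ℝ → ℝ≥0∞}

/- The super-level sets of `f` and `g` at heights below `1` are nonempty, so that the
Brunn–Minkowski inequality applies to all of them. -/
theorem ofReal_mul_lintegral_add_le_of_iSup_eq_one (ha : 0 < a) (hb : 0 < b) (hab : a + b = 1)
    (hf : Measurable f) (hg : Measurable g) (hh : Measurable h) (hf₁ : ⨆ x, f x = 1)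
    (hg₁ : ⨆ x, g x = 1) (H : ∀ x y, f x ^ a * g y ^ b ≤ h (a • x + b • y)) :
    ENNReal.ofReal a * (∫⁻ x, f x) + ENNReal.ofReal b * (∫⁻ x, g x) ≤ ∫⁻ x, h x := by
  have hanti (φ : ℝ → ℝ≥0∞) : Antitone fun t : ℝ => volume {x | ENNReal.ofReal t < φ x} :=
    fun s t hst => measure_mono fun x hx => (ENNReal.ofReal_le_ofReal hst).trans_lt hx
  rw [lintegral_eq_lintegral_Ioi_measure_lt hf, lintegral_eq_lintegral_Ioi_measure_lt hg,
    lintegral_eq_lintegral_Ioi_measure_lt hh, ← lintegral_const_mul _ (hanti f).measurable,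
    ← lintegral_const_mul _ (hanti g).measurable,
    ← lintegral_add_left ((hanti f).measurable.const_mul _)]
  refine lintegral_mono fun t => ?_
  rcases lt_or_ge (ENNReal.ofReal t) 1 with ht | ht
  · refine (ofReal_mul_volume_add_le_volume_smul_add_smul ha hb
      (measurableSet_lt measurable_const hf) (measurableSet_lt measurable_const hg)
      (lt_iSup_iff.1 (ht.trans_eq hf₁.symm)) (lt_iSup_iff.1 (ht.trans_eq hg₁.symm))).trans
      (measure_mono ?_)
    rintro _ ⟨_, ⟨x, hx, rfl⟩, _, ⟨y, hy, rfl⟩, rfl⟩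
    calc ENNReal.ofReal t = ENNReal.ofReal t ^ a * ENNReal.ofReal t ^ b := by
          rw [← ENNReal.rpow_add_of_nonneg _ _ ha.le hb.le, hab, ENNReal.rpow_one]
      _ < f x ^ a * g y ^ b :=
          ENNReal.mul_lt_mul (ENNReal.rpow_lt_rpow hx ha) (ENNReal.rpow_lt_rpow hy hb)
      _ ≤ h (a • x + b • y) := H x y
  · have hempty {φ : ℝ → ℝ≥0∞} (hφ : ⨆ x, φ x = 1) : {x | ENNReal.ofReal t < φ x} = ∅ :=
      Set.eq_empty_of_forall_notMem fun x hx =>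
        (ht.trans_lt hx).not_ge ((le_iSup φ x).trans_eq hφ)
    simp [hempty hf₁, hempty hg₁]

theorem lintegral_rpow_mul_rpow_le_of_iSup_ne_top (ha : 0 < a) (hb : 0 < b) (hab : a + b = 1)
    (hf : Measurable f) (hg : Measurable g) (hh : Measurable h) (hfs : ⨆ x, f x ≠ ⊤)
    (hgs : ⨆ x, g x ≠ ⊤) (H : ∀ x y, f x ^ a * g y ^ b ≤ h (a • x + b • y)) :
    (∫⁻ x, f x) ^ a * (∫⁻ x, g x) ^ b ≤ ∫⁻ x, h x := by
  rcases eq_or_ne (⨆ x, f x) 0 with hf₀ | hf₀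
  · simp [ENNReal.iSup_eq_zero.1 hf₀, ha]
  rcases eq_or_ne (⨆ x, g x) 0 with hg₀ | hg₀
  · simp [ENNReal.iSup_eq_zero.1 hg₀, hb]
  set A := ⨆ x, f x
  set B := ⨆ x, g x
  have hC₀ : A ^ a * B ^ b ≠ 0 := by simp [*]
  have hC : A ^ a * B ^ b ≠ ⊤ := by finiteness
  have hscale (u v : ℝ≥0∞) :
      (A⁻¹ * u) ^ a * (B⁻¹ * v) ^ b = (A ^ a * B ^ b)⁻¹ * (u ^ a * v ^ b) := by
    rw [ENNReal.mul_rpow_of_nonneg _ _ ha.le, ENNReal.mul_rpow_of_nonneg _ _ hb.le,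
      mul_mul_mul_comm, ENNReal.inv_rpow, ENNReal.inv_rpow, ENNReal.mul_inv] <;> simp [*]
  have hnormalized := ofReal_mul_lintegral_add_le_of_iSup_eq_one ha hb hab
    (hf.const_mul A⁻¹) (hg.const_mul B⁻¹) (hh.const_mul (A ^ a * B ^ b)⁻¹)
    (by rw [← ENNReal.mul_iSup, ENNReal.inv_mul_cancel hf₀ hfs])
    (by rw [← ENNReal.mul_iSup, ENNReal.inv_mul_cancel hg₀ hgs])
    (fun x y => (hscale _ _).trans_le (mul_le_mul_right (H x y) _))
  rw [lintegral_const_mul _ hf, lintegral_const_mul _ hg, lintegral_const_mul _ hh] at hnormalized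
  have hprod := (rpow_mul_rpow_le_ofReal_mul_add ha hb hab _ _).trans hnormalized
  rwa [hscale, ENNReal.mul_le_mul_iff_right (ENNReal.inv_ne_zero.2 hC)
    (ENNReal.inv_ne_top.2 hC₀)] at hprod

theorem prekopaLeindler_real : PrekopaLeindler (volume : Measure ℝ) := by
  intro a b ha hb hab f g h hf hg hh H
  have hbdd (φ : ℝ → ℝ≥0∞) (n : ℕ) : ⨆ x, min (φ x) n ≠ ⊤ :=
    ne_top_of_le_ne_top (ENNReal.natCast_ne_top n) (iSup_le fun _ => min_le_right _ _)
  have hsup {φ : ℝ → ℝ≥0∞} (hφ : Measurable φ) {c : ℝ} (hc : 0 < c) :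
      (∫⁻ x, φ x) ^ c = ⨆ n : ℕ, (∫⁻ x, min (φ x) n) ^ c := by
    rw [lintegral_eq_iSup_lintegral_min_nat hφ]
    exact (ENNReal.orderIsoRpow c hc).map_iSup _
  rw [hsup hf ha, hsup hg hb]
  simp_rw [ENNReal.iSup_mul, ENNReal.mul_iSup]
  refine iSup₂_le fun n m => lintegral_rpow_mul_rpow_le_of_iSup_ne_top ha hb hab
    (hf.min measurable_const) (hg.min measurable_const) hh (hbdd f n) (hbdd g m) fun x y => ?_
  exact le_trans (by gcongr <;> exact min_le_left _ _) (H x y)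

end RealLine

namespace PrekopaLeindler

variable {E F : Type*} [AddCommGroup E] [Module ℝ E] [MeasurableSpace E] [AddCommGroup F]
  [Module ℝ F] [MeasurableSpace F] {μ : Measure E} {ν : Measure F}

theorem prod [SFinite ν] (hμ : PrekopaLeindler μ) (hν : PrekopaLeindler ν) :
    PrekopaLeindler (μ.prod ν) := by
  intro a b ha hb hab f g h hf hg hh H
  rw [lintegral_prod _ hf.aemeasurable, lintegral_prod _ hg.aemeasurable,
    lintegral_prod _ hh.aemeasurable]
  exact hμ ha hb hab hf.lintegral_prod_right' hg.lintegral_prod_right' hh.lintegral_prod_right'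
    fun x y => hν ha hb hab (by fun_prop) (by fun_prop) (by fun_prop)
      fun u v => H (x, u) (y, v)

theorem of_measurePreserving (hμ : PrekopaLeindler μ) {e : E → F}
    (he : MeasurePreserving e μ ν) (hlin : IsLinearMap ℝ e) : PrekopaLeindler ν := by
  intro a b ha hb hab f g h hf hg hh H
  rw [← he.lintegral_comp hf, ← he.lintegral_comp hg, ← he.lintegral_comp hh]
  refine hμ ha hb hab (hf.comp he.measurable) (hg.comp he.measurable) (hh.comp he.measurable)
    fun x y => ?_
  rw [hlin.map_add, hlin.map_smul, hlin.map_smul]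
  exact H (e x) (e y)

theorem dirac (x : E) : PrekopaLeindler (Measure.dirac x) := by
  intro a b _ _ hab f g h hf hg hh H
  simpa only [lintegral_dirac' _ hf, lintegral_dirac' _ hg, lintegral_dirac' _ hh,
    Convex.combo_self hab] using H x x

theorem pi {ι : Type*} [Fintype ι] {E : ι → Type*} [∀ i, AddCommGroup (E i)]
    [∀ i, Module ℝ (E i)] [∀ i, MeasurableSpace (E i)] {μ : ∀ i, Measure (E i)}
    [∀ i, SigmaFinite (μ i)] (hμ : ∀ i, PrekopaLeindler (μ i)) :
    PrekopaLeindler (Measure.pi μ) := by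
  revert E
  refine Fintype.induction_empty_option (P := fun ι _ => ∀ {E : ι → Type _}
    [∀ i, AddCommGroup (E i)] [∀ i, Module ℝ (E i)] [∀ i, MeasurableSpace (E i)]
    {μ : ∀ i, Measure (E i)} [∀ i, SigmaFinite (μ i)], (∀ i, PrekopaLeindler (μ i)) →
    PrekopaLeindler (Measure.pi μ)) ?of_equiv ?empty ?option ι
  case of_equiv =>
    intro ι κ _ e ih E _ _ _ μ _ hμ
    let _ := Fintype.ofEquiv κ e.symm
    exact (ih fun i => hμ (e i)).of_measurePreserving (measurePreserving_piCongrLeft μ e)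
      (LinearEquiv.piCongrLeft ℝ E e).toLinearMap.isLinear
  case empty =>
    intro E _ _ _ μ _ _
    rw [Measure.pi_of_empty]
    exact dirac _
  case option =>
    intro ι _ ih E _ _ _ μ _ hμ
    refine ((ih fun i => hμ (some i)).prod (hμ none)).of_measurePreserving
      ⟨(MeasurableEquiv.piOptionEquivProd E).symm.measurable,
        Measure.pi_map_piOptionEquivProd μ⟩ ⟨fun x y => ?_, fun c x => ?_⟩
    · ext (_ | i) <;> rfl
    · ext (_ | i) <;> rfl

end PrekopaLeindler

section Prekopa

variable {E F : Type*} [AddCommGroup E] [Module ℝ E] [AddCommGroup F] [Module ℝ F]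
  [MeasurableSpace F] {μ : Measure F} {W : E × F → ℝ}

theorem lintegral_exp_neg_rpow_mul_le_of_convexOn (hμ : PrekopaLeindler μ)
    (hW : ConvexOn ℝ Set.univ W) (hWm : ∀ x, Measurable fun u => W (x, u)) {a b : ℝ}
    (ha : 0 < a) (hb : 0 < b) (hab : a + b = 1) (x y : E) :
    (∫⁻ u, ENNReal.ofReal (exp (-W (x, u))) ∂μ) ^ a *
        (∫⁻ u, ENNReal.ofReal (exp (-W (y, u))) ∂μ) ^ b ≤
      ∫⁻ u, ENNReal.ofReal (exp (-W (a • x + b • y, u))) ∂μ := by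
  refine hμ ha hb hab (hWm x).neg.exp.ennreal_ofReal (hWm y).neg.exp.ennreal_ofReal
    (hWm _).neg.exp.ennreal_ofReal fun u v => ?_
  rw [ENNReal.ofReal_rpow_of_pos (exp_pos _), ENNReal.ofReal_rpow_of_pos (exp_pos _),
    ← ENNReal.ofReal_mul (by positivity), ← exp_mul, ← exp_mul, ← exp_add]
  have hconv := hW.2 (Set.mem_univ (x, u)) (Set.mem_univ (y, v)) ha.le hb.le hab
  simp only [Prod.smul_mk, Prod.mk_add_mk, smul_eq_mul] at hconv
  gcongr
  linarith

theorem integrable_exp_neg_of_convexOn [NeZero μ] (hμ : PrekopaLeindler μ)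
    (hW : ConvexOn ℝ Set.univ W) (hWm : ∀ x, Measurable fun u => W (x, u)) {x₀ : E}
    (hx₀ : Integrable (fun u => exp (-W (x₀, u))) μ) (x : E) :
    Integrable (fun u => exp (-W (x, u))) μ := by
  have hiff (z : E) : Integrable (fun u => exp (-W (z, u))) μ ↔
      ∫⁻ u, ENNReal.ofReal (exp (-W (z, u))) ∂μ ≠ ⊤ :=
    (lintegral_ofReal_ne_top_iff_integrable (hWm z).neg.exp.aestronglyMeasurable
      (.of_forall fun _ => (exp_pos _).le)).symm
  rw [hiff] at hx₀ ⊢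
  have hne (z : E) : ∫⁻ u, ENNReal.ofReal (exp (-W (z, u))) ∂μ ≠ 0 := fun hz => by
    obtain ⟨u, hu⟩ := ((lintegral_eq_zero_iff (hWm z).neg.exp.ennreal_ofReal).1 hz).exists
    exact (ENNReal.ofReal_pos.2 (exp_pos _)).ne' hu
  have hle := lintegral_exp_neg_rpow_mul_le_of_convexOn hμ hW hWm one_half_pos one_half_pos
    (add_halves 1) x ((2 : ℝ) • x₀ - x)
  rw [show (1 / 2 : ℝ) • x + (1 / 2 : ℝ) • ((2 : ℝ) • x₀ - x) = x₀ by module] at hle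
  intro hx
  rw [hx, ENNReal.top_rpow_of_pos one_half_pos,
    ENNReal.top_mul (by simp [hne]), top_le_iff] at hle
  exact hx₀ hle

theorem concaveOn_log_integral_exp_neg (hμ : PrekopaLeindler μ) (hW : ConvexOn ℝ Set.univ W)
    (hWm : ∀ x, Measurable fun u => W (x, u))
    (hint : ∀ x, Integrable (fun u => exp (-W (x, u))) μ) :
    ConcaveOn ℝ Set.univ fun x => log (∫ u, exp (-W (x, u)) ∂μ) := by
  rcases eq_zero_or_neZero μ with rfl | hμ₀
  · simpa using concaveOn_const (0 : ℝ) convex_univ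
  have hpos (x : E) : 0 < ∫ u, exp (-W (x, u)) ∂μ := integral_exp_pos (hint x)
  refine concaveOn_iff_forall_pos.2 ⟨convex_univ, fun x _ y _ a b ha hb hab => ?_⟩
  have hle := lintegral_exp_neg_rpow_mul_le_of_convexOn hμ hW hWm ha hb hab x y
  have hofReal (z : E) : ∫⁻ u, ENNReal.ofReal (exp (-W (z, u))) ∂μ =
      ENNReal.ofReal (∫ u, exp (-W (z, u)) ∂μ) :=
    (ofReal_integral_eq_lintegral_ofReal (hint z) (.of_forall fun _ => (exp_pos _).le)).symm
  rw [hofReal, hofReal, hofReal, ENNReal.ofReal_rpow_of_pos (hpos x),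
    ENNReal.ofReal_rpow_of_pos (hpos y), ← ENNReal.ofReal_mul (by have := hpos x; positivity),
    ENNReal.ofReal_le_ofReal_iff (hpos _).le] at hle
  calc a • log (∫ u, exp (-W (x, u)) ∂μ) + b • log (∫ u, exp (-W (y, u)) ∂μ)
      = log ((∫ u, exp (-W (x, u)) ∂μ) ^ a * (∫ u, exp (-W (y, u)) ∂μ) ^ b) := by
        rw [log_mul (rpow_pos_of_pos (hpos x) a).ne' (rpow_pos_of_pos (hpos y) b).ne',
          log_rpow (hpos x), log_rpow (hpos y), smul_eq_mul, smul_eq_mul]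
    _ ≤ log (∫ u, exp (-W (a • x + b • y, u)) ∂μ) :=
        log_le_log (by have := hpos x; have := hpos y; positivity) hle

end Prekopa

section CumulantGeneratingFunction

variable {Ω : Type*} [MeasurableSpace Ω] {P : Measure Ω} {X : Ω → ℝ}

theorem variance_eq_iteratedDeriv_two_cgf_zero [IsProbabilityMeasure P]
    (hX : 0 ∈ interior (integrableExpSet X P)) : Var[X; P] = iteratedDeriv 2 (cgf X P) 0 := by
  simpa using variance_tilted_mul hX

theorem variance_le_of_concaveOn_cgf_sub [IsProbabilityMeasure P] {s : ℝ}
    (hX : integrableExpSet X P = Set.univ)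
    (hconc : ConcaveOn ℝ Set.univ fun t => cgf X P t - s / 2 * t ^ 2) : Var[X; P] ≤ s := by
  have han : AnalyticOnNhd ℝ (cgf X P) Set.univ := by
    simpa [hX] using analyticOnNhd_cgf (X := X) (μ := P)
  have hd : Differentiable ℝ (cgf X P) := fun t => (han t trivial).differentiableAt
  have hd' : Differentiable ℝ (deriv (cgf X P)) := fun t => (han.deriv t trivial).differentiableAt
  have hderiv : deriv (fun t => cgf X P t - s / 2 * t ^ 2) =
      fun t => deriv (cgf X P) t - s * t := by
    ext t
    refine (((hd t).hasDerivAt.sub ((hasDerivAt_pow 2 t).const_mul (s / 2))).congr_deriv ?_).deriv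
    ring
  have hanti : Antitone fun t => deriv (cgf X P) t - s * t := by
    rw [← hderiv, ← antitoneOn_univ]
    exact hconc.antitoneOn_deriv fun t _ => by fun_prop
  have hnonpos : deriv (fun t => deriv (cgf X P) t - s * t) 0 ≤ 0 := hanti.deriv_nonpos
  rw [deriv_fun_sub (hd' 0) (by fun_prop), deriv_const_mul_field, deriv_id''] at hnonpos
  rw [variance_eq_iteratedDeriv_two_cgf_zero (by simp [hX]), iteratedDeriv_succ,
    iteratedDeriv_one]
  linarith

theorem variance_eq_of_cgf_eq [IsProbabilityMeasure P] {s : ℝ}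
    (hX : integrableExpSet X P = Set.univ) (hcgf : cgf X P = fun t => s / 2 * t ^ 2) :
    Var[X; P] = s := by
  have hderiv : deriv (fun t : ℝ => s / 2 * t ^ 2) = fun t => s * t := by
    ext t
    rw [deriv_const_mul_field, deriv_pow_field]
    push_cast
    ring
  rw [variance_eq_iteratedDeriv_two_cgf_zero (by simp [hX]), hcgf, iteratedDeriv_succ,
    iteratedDeriv_one, hderiv, deriv_const_mul_field, deriv_id'', mul_one]

theorem integrable_exp_mul_tilted_iff {f : Ω → ℝ} (hf : Integrable (fun x => exp (f x)) P)
    (t : ℝ) : Integrable (fun x => exp (t * X x)) (P.tilted f) ↔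
      Integrable (fun x => exp (f x + t * X x)) P := by
  simp only [integrable_tilted_iff hf, smul_eq_mul, exp_add]

theorem cgf_tilted [NeZero P] {f : Ω → ℝ} {t : ℝ} (hf : Integrable (fun x => exp (f x)) P)
    (hX : Integrable (fun x => exp (f x + t * X x)) P) :
    cgf X (P.tilted f) t = log (∫ x, exp (f x + t * X x) ∂P) - log (∫ x, exp (f x) ∂P) := by
  rw [cgf, mgf, integral_exp_tilted]
  exact log_div (integral_exp_pos hX).ne' (integral_exp_pos hf).ne'

end CumulantGeneratingFunction

section BrascampLieb

variable {E : Type*} [AddCommGroup E] [Module ℝ E] {B : LinearMap.BilinForm ℝ E}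

theorem convexOn_bilinForm_self (hB : B.IsNonneg) : ConvexOn ℝ Set.univ fun x => B x x := by
  refine ⟨convex_univ, fun x _ y _ a b ha hb hab => ?_⟩
  have hgap : a * B x x + b * B y y - B (a • x + b • y) (a • x + b • y) =
      a * b * B (x - y) (x - y) := by
    obtain rfl := eq_sub_of_add_eq hab
    simp only [map_add, map_sub, map_smul, LinearMap.add_apply, LinearMap.sub_apply,
      LinearMap.smul_apply, smul_eq_mul]
    ring
  have := mul_nonneg (mul_nonneg ha hb) (hB.nonneg (x - y))
  simp only [smul_eq_mul]
  linarith

theorem half_bilinForm_sub_smul_self (hB : B.IsSymm) (g x : E) (t : ℝ) :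
    1 / 2 * B (x - t • g) (x - t • g) =
      1 / 2 * B x x - t * B g x + B g g / 2 * t ^ 2 := by
  simp only [map_sub, map_smul, LinearMap.sub_apply, LinearMap.smul_apply, smul_eq_mul, hB.eq x g]
  ring

theorem convexOn_sub_mul_bilinForm_add {H : E → ℝ} (hB : B.IsPosSemidef)
    (hH : ConvexOn ℝ Set.univ fun x => H x - 1 / 2 * B x x) (g : E) :
    ConvexOn ℝ Set.univ fun p : ℝ × E => H p.2 - p.1 * B g p.2 + B g g / 2 * p.1 ^ 2 := by
  have hsnd := hH.comp_linearMap (LinearMap.snd ℝ ℝ E)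
  have hsq := ((convexOn_bilinForm_self hB.isNonneg).smul one_half_pos.le).comp_linearMap
    (LinearMap.snd ℝ ℝ E - (LinearMap.fst ℝ ℝ E).smulRight g)
  refine (hsnd.add hsq).congr fun p _ => ?_
  have := half_bilinForm_sub_smul_self hB.isSymm g p.2 p.1
  simp only [Pi.add_apply, Function.comp_apply, LinearMap.snd_apply, LinearMap.fst_apply,
    LinearMap.sub_apply, LinearMap.smulRight_apply, smul_eq_mul] at this ⊢
  linarith

variable [MeasurableSpace E] {μ : Measure E}

theorem variance_tilted_neg_le [NeZero μ] (hμ : PrekopaLeindler μ) {H : E → ℝ}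
    (hB : B.IsPosSemidef) (hH : ConvexOn ℝ Set.univ fun x => H x - 1 / 2 * B x x)
    (hHm : Measurable H) (hHint : Integrable (fun x => exp (-H x)) μ) {g : E}
    (hg : Measurable (B g)) : Var[B g; μ.tilted fun x => -H x] ≤ B g g := by
  let W : ℝ × E → ℝ := fun p => H p.2 - p.1 * B g p.2 + B g g / 2 * p.1 ^ 2
  have hW : ConvexOn ℝ Set.univ W := convexOn_sub_mul_bilinForm_add hB hH g
  have hWm (t : ℝ) : Measurable fun x => W (t, x) := by fun_prop
  have hWint : ∀ t, Integrable (fun x => exp (-W (t, x))) μ :=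
    integrable_exp_neg_of_convexOn hμ hW hWm (x₀ := 0) (by simpa [W] using hHint)
  have hsplit (t : ℝ) (x : E) : exp (-H x + t * B g x) =
      exp (B g g / 2 * t ^ 2) * exp (-W (t, x)) := by
    rw [← exp_add]
    simp only [W]
    ring_nf
  have hint (t : ℝ) : Integrable (fun x => exp (-H x + t * B g x)) μ := by
    simpa only [hsplit] using (hWint t).const_mul _
  have := isProbabilityMeasure_tilted hHint
  refine variance_le_of_concaveOn_cgf_sub
    (Set.eq_univ_of_forall fun t => (integrable_exp_mul_tilted_iff hHint t).2 (hint t)) ?_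
  refine ((concaveOn_log_integral_exp_neg hμ hW hWm hWint).add_const
    (-log (∫ x, exp (-H x) ∂μ))).congr fun t _ => ?_
  simp only [cgf_tilted hHint (hint t), hsplit, integral_const_mul]
  rw [log_mul (exp_pos _).ne' (integral_exp_pos (hWint t)).ne', log_exp, Pi.add_apply]
  ring

theorem variance_tilted_neg_half_bilinForm [MeasurableAdd E] [NeZero μ] [μ.IsAddRightInvariant]
    (hB : B.IsSymm) (hint : Integrable (fun x => exp (-(1 / 2 * B x x))) μ) (g : E) :
    Var[B g; μ.tilted fun x => -(1 / 2 * B x x)] = B g g := by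
  have hshift (t : ℝ) (x : E) : exp (-(1 / 2 * B x x) + t * B g x) =
      exp (B g g / 2 * t ^ 2) * exp (-(1 / 2 * B (x - t • g) (x - t • g))) := by
    rw [half_bilinForm_sub_smul_self hB, ← exp_add]
    ring_nf
  have hint' (t : ℝ) : Integrable (fun x => exp (-(1 / 2 * B x x) + t * B g x)) μ := by
    simpa only [hshift] using (hint.comp_sub_right (t • g)).const_mul _
  have hcgf : cgf (B g) (μ.tilted fun x => -(1 / 2 * B x x)) = fun t => B g g / 2 * t ^ 2 := by
    ext t
    simp only [cgf_tilted hint (hint' t), hshift, integral_const_mul]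
    rw [integral_sub_right_eq_self fun x => exp (-(1 / 2 * B x x)),
      log_mul (exp_pos _).ne' (integral_exp_pos hint).ne', log_exp]
    ring
  have := isProbabilityMeasure_tilted hint
  have huniv : integrableExpSet (B g) (μ.tilted fun x => -(1 / 2 * B x x)) = Set.univ :=
    Set.eq_univ_of_forall fun t => (integrable_exp_mul_tilted_iff hint t).2 (hint' t)
  exact variance_eq_of_cgf_eq huniv hcgf

end BrascampLieb

section GibbsMeasure

variable {Ω : Type*} [MeasurableSpace Ω] {μ P : Measure Ω} [IsProbabilityMeasure P] {f : Ω → ℝ}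
  {c : ℝ≥0∞}

theorem lintegral_ofReal_exp_eq_inv_of_eq_smul_withDensity
    (hP : P = c • μ.withDensity fun x => ENNReal.ofReal (exp (f x))) :
    ∫⁻ x, ENNReal.ofReal (exp (f x)) ∂μ = c⁻¹ := by
  have hone : c * ∫⁻ x, ENNReal.ofReal (exp (f x)) ∂μ = 1 := by
    simpa [hP] using measure_univ (μ := P)
  exact ENNReal.eq_inv_of_mul_eq_one_left (by rwa [mul_comm])

theorem integrable_exp_of_eq_smul_withDensity (hf : Measurable f)
    (hP : P = c • μ.withDensity fun x => ENNReal.ofReal (exp (f x))) :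
    Integrable (fun x => exp (f x)) μ := by
  have hc : c ≠ 0 := by
    rintro rfl
    exact IsProbabilityMeasure.ne_zero P (by rw [hP, zero_smul])
  rw [← lintegral_ofReal_ne_top_iff_integrable hf.exp.aestronglyMeasurable
    (.of_forall fun _ => (exp_pos _).le), lintegral_ofReal_exp_eq_inv_of_eq_smul_withDensity hP]
  exact ENNReal.inv_ne_top.2 hc

theorem eq_tilted_of_eq_smul_withDensity (hf : Measurable f)
    (hP : P = c • μ.withDensity fun x => ENNReal.ofReal (exp (f x))) : P = μ.tilted f := by
  have hint := integrable_exp_of_eq_smul_withDensity hf hP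
  have : NeZero μ := ⟨by
    rintro rfl
    exact IsProbabilityMeasure.ne_zero P (by simp [hP])⟩
  have hc : ENNReal.ofReal (∫ x, exp (f x) ∂μ)⁻¹ = c := by
    rw [ENNReal.ofReal_inv_of_pos (integral_exp_pos hint),
      ofReal_integral_eq_lintegral_ofReal hint (.of_forall fun _ => (exp_pos _).le),
      lintegral_ofReal_exp_eq_inv_of_eq_smul_withDensity hP, inv_inv]
  conv_lhs => rw [hP, ← withDensity_smul _ hf.exp.ennreal_ofReal]
  refine withDensity_congr_ae (.of_forall fun x => ?_)
  simp only [Pi.smul_apply, smul_eq_mul, div_eq_inv_mul]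
  rw [ENNReal.ofReal_mul (by positivity), hc]

end GibbsMeasure

section StrongConvexity

theorem strongConvexOn_univ_of_le_deriv2 {V : ℝ → ℝ} {a : ℝ} (hV : ContDiff ℝ 2 V)
    (ha : ∀ x, a ≤ deriv (deriv V) x) : StrongConvexOn Set.univ a V := by
  have hd : Differentiable ℝ V := hV.differentiable two_ne_zero
  have hd' : Differentiable ℝ (deriv V) :=
    ((contDiff_succ_iff_deriv (n := 1)).1 hV).2.2.differentiable one_ne_zero
  have hderiv : deriv (fun x => V x - a / 2 * x ^ 2) = fun x => deriv V x - a * x := by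
    ext x
    rw [deriv_fun_sub (hd x) (by fun_prop), deriv_const_mul_field, deriv_pow_field]
    push_cast
    ring
  simp only [strongConvexOn_iff_convex, Real.norm_eq_abs, sq_abs]
  refine convexOn_univ_of_deriv2_nonneg (by fun_prop) (by rw [hderiv]; fun_prop) fun x => ?_
  rw [Function.iterate_succ_apply, Function.iterate_one, hderiv,
    deriv_fun_sub (hd' x) (by fun_prop), deriv_const_mul_field, deriv_id'']
  linarith [ha x]

variable {E : Type*} [AddCommGroup E] [Module ℝ E]

theorem convexOn_comp_add_const_sub_sq {V : ℝ → ℝ} {a : ℝ} (hV : StrongConvexOn Set.univ a V)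
    (ℓ : E →ₗ[ℝ] ℝ) (c : ℝ) :
    ConvexOn ℝ Set.univ fun x => V (ℓ x + c) - a / 2 * ℓ x ^ 2 := by
  refine ⟨convex_univ, fun x _ y _ p q hp hq hpq => ?_⟩
  have hle := hV.2 (Set.mem_univ (ℓ x + c)) (Set.mem_univ (ℓ y + c)) hp hq hpq
  have harg : p • (ℓ x + c) + q • (ℓ y + c) = ℓ (p • x + q • y) + c := by
    simp only [map_add, map_smul, smul_eq_mul]
    linear_combination c * hpq
  rw [harg, add_sub_add_right_eq_sub] at hle
  simp only [Real.norm_eq_abs, sq_abs, map_add, map_smul, smul_eq_mul] at hle ⊢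
  obtain rfl := eq_sub_of_add_eq hpq
  linarith

theorem convexOn_sum {ι : Type*} (s : Finset ι) {f : ι → E → ℝ}
    (hf : ∀ i ∈ s, ConvexOn ℝ Set.univ (f i)) :
    ConvexOn ℝ Set.univ fun x => ∑ i ∈ s, f i x := by
  rw [← Finset.sum_fn]
  exact Finset.sum_induction f (ConvexOn ℝ Set.univ) (fun _ _ => ConvexOn.add)
    (convexOn_const 0 convex_univ) hf

end StrongConvexity

section ZeroExtension

variable {α : Type*} [DecidableEq α] (B : Finset α)

/-- Extension of interior fields by zero on the boundary, as a linear map. It is the linear part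
of the affine map `h ↦ h ∨ ψ`, whatever `ψ` is. -/
def zeroExtend : ({x // x ∉ B} → ℝ) →ₗ[ℝ] α → ℝ where
  toFun h := gvee B h 0
  map_add' g h := by
    ext x
    by_cases hx : x ∈ B <;> simp [gvee, hx]
  map_smul' c h := by
    ext x
    by_cases hx : x ∈ B <;> simp [gvee, hx]

theorem gvee_eq_zeroExtend_add (h : {x // x ∉ B} → ℝ) (ψ : α → ℝ) :
    gvee B h ψ = zeroExtend B h + gvee B 0 ψ := by
  ext x
  by_cases hx : x ∈ B <;> simp [zeroExtend, gvee, hx]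

theorem zeroExtend_apply_of_mem {x : α} (hx : x ∈ B) (h : {x // x ∉ B} → ℝ) :
    zeroExtend B h x = 0 := by
  simp [zeroExtend, gvee, hx]

theorem zeroExtend_apply_coe (h : {x // x ∉ B} → ℝ) (x : {x // x ∉ B}) :
    zeroExtend B h x = h x := by
  simp [zeroExtend, gvee, x.2]

theorem measurable_gvee (ψ : α → ℝ) (x : α) : Measurable fun h => gvee B h ψ x := by
  by_cases hx : x ∉ B
  · simpa only [gvee, dif_pos hx] using measurable_pi_apply _
  · simpa only [gvee, dif_neg hx] using measurable_const

end ZeroExtension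

section DirichletForm

variable {α : Type*} [Fintype α] [DecidableEq α] (G : SimpleGraph α) [DecidableRel G.Adj]
  (B : Finset α)

/-- The Dirichlet form `ℰ(g, h) = ∑_{b ∈ E} ∇(g ∨ 0)(b) ∇(h ∨ 0)(b)` of the graph on fields
vanishing on the boundary: the inverse covariance of the zero-boundary free field. -/
def dirichletForm : LinearMap.BilinForm ℝ ({x // x ∉ B} → ℝ) :=
  (Matrix.toLinearMap₂' ℝ (G.lapMatrix ℝ)).compl₁₂ (zeroExtend B) (zeroExtend B)

theorem dirichletForm_self (h : {x // x ∉ B} → ℝ) :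
    dirichletForm G B h h = 1 / 2 * ∑ x, ∑ y,
      if G.Adj x y then (zeroExtend B h y - zeroExtend B h x) ^ 2 else 0 := by
  simp only [dirichletForm, LinearMap.compl₁₂_apply, SimpleGraph.lapMatrix_toLinearMap₂',
    sub_sq_comm, div_eq_inv_mul, mul_one]

theorem isPosSemidef_dirichletForm : (dirichletForm G B).IsPosSemidef where
  eq g h := by
    simp only [dirichletForm, LinearMap.compl₁₂_apply, Matrix.toLinearMap₂'_apply']
    rw [Matrix.dotProduct_mulVec, dotProduct_comm, ← Matrix.mulVec_transpose,
      (G.isSymm_lapMatrix (R := ℝ)).eq]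
  nonneg h := by
    rw [dirichletForm_self]
    positivity

variable {G B} (hB : ∀ x, ∃ b ∈ B, G.Reachable x b)
include hB

theorem eq_zero_of_dirichletForm_self_eq_zero {h : {x // x ∉ B} → ℝ}
    (hh : dirichletForm G B h h = 0) : h = 0 := by
  have hconst := (G.lapMatrix_toLinearMap₂'_apply'_eq_zero_iff_forall_reachable _).1 hh
  ext x
  obtain ⟨b, hb, hxb⟩ := hB x
  rw [← zeroExtend_apply_coe B h x, hconst _ _ hxb, zeroExtend_apply_of_mem B hb, Pi.zero_apply]

theorem surjective_dirichletForm : Function.Surjective (dirichletForm G B) := by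
  rw [← LinearMap.injective_iff_surjective_of_finrank_eq_finrank Subspace.dual_finrank_eq.symm,
    injective_iff_map_eq_zero]
  intro g hg
  exact eq_zero_of_dirichletForm_self_eq_zero hB (by rw [hg, LinearMap.zero_apply])

end DirichletForm

section GraphEnergies

variable {α : Type*} [Fintype α] [DecidableEq α] {G : SimpleGraph α} [DecidableRel G.Adj]
  {B : Finset α}

theorem graphDGFFEnergy_one_zero_eq_half_dirichletForm :
    graphDGFFEnergy G B (fun _ _ => 1) (fun _ => 0) =
      fun h => 1 / 2 * dirichletForm G B h h := by
  ext h
  rw [dirichletForm_self, ← mul_assoc]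
  simp only [graphDGFFEnergy, one_mul, zeroExtend, LinearMap.coe_mk, AddHom.coe_mk, Pi.zero_def]
  ring

theorem measurable_graphDGFFEnergy (w : α → α → ℝ) (φ : α → ℝ) :
    Measurable (graphDGFFEnergy G B w φ) := by
  have hgvee := measurable_gvee B φ
  refine (Finset.measurable_fun_sum _ fun x _ =>
    Finset.measurable_fun_sum _ fun y _ => ?_).const_mul _
  split_ifs <;> fun_prop

theorem measurable_graphGLEnergy {V : ℝ → ℝ} (hV : Measurable V) (ψ : α → ℝ) :
    Measurable (graphGLEnergy V G B ψ) := by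
  have hgvee := measurable_gvee B ψ
  refine (Finset.measurable_fun_sum _ fun x _ =>
    Finset.measurable_fun_sum _ fun y _ => ?_).const_mul _
  split_ifs <;> fun_prop

theorem convexOn_graphGLEnergy_sub_dirichletForm {V : ℝ → ℝ} {a : ℝ}
    (hV : StrongConvexOn Set.univ a V) (ψ : α → ℝ) :
    ConvexOn ℝ Set.univ fun h => graphGLEnergy V G B ψ h - 1 / 2 * (a • dirichletForm G B) h h := by
  let grad (x y : α) : ({x // x ∉ B} → ℝ) →ₗ[ℝ] ℝ :=
    (LinearMap.proj (R := ℝ) (φ := fun _ => ℝ) y - LinearMap.proj x) ∘ₗ zeroExtend B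
  let shift (x y : α) : ℝ := gvee B 0 ψ y - gvee B 0 ψ x
  have hterm (x y : α) : ConvexOn ℝ Set.univ fun h =>
      if G.Adj x y then V (grad x y h + shift x y) - a / 2 * grad x y h ^ 2 else 0 := by
    split_ifs
    · exact convexOn_comp_add_const_sub_sq hV _ _
    · exact convexOn_const 0 convex_univ
  have hsum := (convexOn_sum Finset.univ fun x _ => convexOn_sum Finset.univ fun y _ =>
    hterm x y).smul (one_half_pos (α := ℝ)).le
  refine hsum.congr fun h _ => ?_
  simp only [LinearMap.smul_apply, dirichletForm_self, graphGLEnergy, gvee_eq_zeroExtend_add B h ψ,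
    Pi.add_apply, add_sub_add_comm, smul_eq_mul, grad, shift, LinearMap.comp_apply,
    LinearMap.sub_apply, LinearMap.proj_apply]
  rw [mul_left_comm a, ← mul_sub]
  simp only [Finset.mul_sum, ← Finset.sum_sub_distrib]
  refine Finset.sum_congr rfl fun x _ => Finset.sum_congr rfl fun y _ => ?_
  split_ifs <;> ring

theorem IsGraphGL.eq_tilted {V : ℝ → ℝ} (hV : Measurable V) {ψ : α → ℝ}
    {P : Measure ({x // x ∉ B} → ℝ)} (hP : IsGraphGL V G B ψ P) :
    P = volume.tilted fun h => -graphGLEnergy V G B ψ h := by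
  obtain ⟨_, c, -, -, hc⟩ := hP
  exact eq_tilted_of_eq_smul_withDensity (measurable_graphGLEnergy hV ψ).neg hc

theorem IsGraphGL.integrable_exp_neg {V : ℝ → ℝ} (hV : Measurable V) {ψ : α → ℝ}
    {P : Measure ({x // x ∉ B} → ℝ)} (hP : IsGraphGL V G B ψ P) :
    Integrable (fun h => exp (-graphGLEnergy V G B ψ h)) := by
  obtain ⟨_, c, -, -, hc⟩ := hP
  exact integrable_exp_of_eq_smul_withDensity (measurable_graphGLEnergy hV ψ).neg hc

theorem IsGraphDGFF.eq_tilted {w : α → α → ℝ} {φ : α → ℝ}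
    {P : Measure ({x // x ∉ B} → ℝ)} (hP : IsGraphDGFF G B w φ P) :
    P = volume.tilted fun h => -graphDGFFEnergy G B w φ h := by
  obtain ⟨_, c, -, -, hc⟩ := hP
  exact eq_tilted_of_eq_smul_withDensity (measurable_graphDGFFEnergy w φ).neg hc

theorem IsGraphDGFF.integrable_exp_neg {w : α → α → ℝ} {φ : α → ℝ}
    {P : Measure ({x // x ∉ B} → ℝ)} (hP : IsGraphDGFF G B w φ P) :
    Integrable (fun h => exp (-graphDGFFEnergy G B w φ h)) := by
  obtain ⟨_, c, -, -, hc⟩ := hP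
  exact integrable_exp_of_eq_smul_withDensity (measurable_graphDGFFEnergy w φ).neg hc

theorem IsGraphGL.variance_dirichletForm_le {V : ℝ → ℝ} {a : ℝ} (ha : 0 < a)
    (hV : StrongConvexOn Set.univ a V) {ψ : α → ℝ} {P : Measure ({x // x ∉ B} → ℝ)}
    (hP : IsGraphGL V G B ψ P) (g : {x // x ∉ B} → ℝ) :
    Var[dirichletForm G B g; P] ≤ a⁻¹ * dirichletForm G B g g := by
  have hVm : Measurable V :=
    (continuousOn_univ.1 ((hV.strictConvexOn ha).convexOn.continuousOn isOpen_univ)).measurable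
  have hPL : PrekopaLeindler (volume : Measure ({x // x ∉ B} → ℝ)) :=
    .pi fun _ => prekopaLeindler_real
  have hform : (a • dirichletForm G B) (a⁻¹ • g) = dirichletForm G B g := by
    rw [LinearMap.smul_apply, map_smul, smul_inv_smul₀ ha.ne']
  have hle := variance_tilted_neg_le hPL ((isPosSemidef_dirichletForm G B).smul ha.le)
    (convexOn_graphGLEnergy_sub_dirichletForm hV ψ) (measurable_graphGLEnergy hVm ψ)
    (hP.integrable_exp_neg hVm) (g := a⁻¹ • g)
    (LinearMap.continuous_of_finiteDimensional _).measurable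
  rwa [← hP.eq_tilted hVm, hform, map_smul, smul_eq_mul] at hle

theorem IsGraphDGFF.variance_dirichletForm {P : Measure ({x // x ∉ B} → ℝ)}
    (hP : IsGraphDGFF G B (fun _ _ => 1) (fun _ => 0) P) (g : {x // x ∉ B} → ℝ) :
    Var[dirichletForm G B g; P] = dirichletForm G B g g := by
  have hint := hP.integrable_exp_neg
  rw [hP.eq_tilted]
  simp only [graphDGFFEnergy_one_zero_eq_half_dirichletForm] at hint ⊢
  exact variance_tilted_neg_half_bilinForm (isPosSemidef_dirichletForm G B).isSymm hint g

end GraphEnergies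

theorem brascamp_lieb_variance_general {V : ℝ → ℝ} {a : ℝ} (ha : 0 < a)
    (hV : StrongConvexOn Set.univ a V) {α : Type*} [Fintype α] [DecidableEq α]
    {G : SimpleGraph α} [DecidableRel G.Adj] {B : Finset α}
    (hB : ∀ x, ∃ b ∈ B, G.Reachable x b) {ψ : α → ℝ} (ν : {x // x ∉ B} → ℝ)
    {P Pstar : Measure ({x // x ∉ B} → ℝ)} (hP : IsGraphGL V G B ψ P)
    (hPstar : IsGraphDGFF G B (fun _ _ => 1) (fun _ => 0) Pstar) :
    Var[fun h => ∑ x, ν x * h x; P] ≤ a⁻¹ * Var[fun h => ∑ x, ν x * h x; Pstar] := by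
  let pairing : Module.Dual ℝ ({x // x ∉ B} → ℝ) := ∑ x, ν x • LinearMap.proj x
  obtain ⟨g, hg⟩ := surjective_dirichletForm hB pairing
  have hpairing : (fun h => ∑ x, ν x * h x) = dirichletForm G B g := by
    ext h
    simp [hg, pairing]
  rw [hpairing, hPstar.variance_dirichletForm]
  exact hP.variance_dirichletForm_le ha hV g

/-- Brascamp–Lieb variance inequality.
There is `C > 0` depending only on `a_V, A_V` such that for every finite connected graph
`G = (V ∪ ∂V, E)` with `∂V ≠ ∅`, every boundary condition `ψ` and every `ν ∈ ℝ^V`, the variance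
of `⟨ν, h⟩` under the GL measure `P^ψ` is at most `C` times the variance of `⟨ν, h*⟩` under the
zero-boundary unit-weight DGFF. -/
theorem brascamp_lieb_variance (aV AV : ℝ) (haV : 0 < aV) :
    ∃ C : ℝ, 0 < C ∧
      ∀ (V : ℝ → ℝ), ContDiff ℝ 2 V → (∀ x, V (-x) = V x) →
        (∀ x, aV ≤ deriv (deriv V) x) → (∀ x, deriv (deriv V) x ≤ AV) →
      ∀ (α : Type) [Fintype α] [DecidableEq α] (G : SimpleGraph α) [DecidableRel G.Adj],
        G.Connected →
      ∀ (B : Finset α), B.Nonempty →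
      ∀ (ψ : α → ℝ) (ν : {x // x ∉ B} → ℝ) (P Pstar : Measure ({x // x ∉ B} → ℝ)),
        IsGraphGL V G B ψ P →
        IsGraphDGFF G B (fun _ _ => 1) (fun _ => 0) Pstar →
        variance (fun h => ∑ x, ν x * h x) P ≤ C * variance (fun h => ∑ x, ν x * h x) Pstar := by
  exact ⟨aV⁻¹, inv_pos.2 haV, fun V hV _ ha _ α _ _ G _ hG B ⟨b, hb⟩ ψ ν P Pstar hP hPstar =>
    brascamp_lieb_variance_general haV (strongConvexOn_univ_of_le_deriv2 hV ha)
      (fun x => ⟨b, hb, hG.preconnected x b⟩) ν hP hPstar⟩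

end
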